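/- Let X = ℓ∞³, Y = ℓ₁³, and let T : X → Y be a bounded linear operator with ‖T‖ = 1 such that M_T ∩ Ext(B_X) = {±x₁, ±x₂, ±x₃, ±x₄}. Suppose |S₁| = 6, |S₂| = 2 and |S₃| = 0. If it is NOT the case that both ±J(Tx_i) = ±J(Tx_j) for all x_i, x_j ∈ S₁ and ±J(Tx_i) ⊆ ±Ext J(Tx_k) for all x_i ∈ S₁, x_k ∈ S₂, then T is 5-smooth, i.e., dim span J(T) = 5. -/

import Mathlib

open Metric Set Module Pointwise

noncomputable section

/-- `J x` is the set of supporting functionals of `x`. -/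
def suppFunctionals {E : Type*} [NormedAddCommGroup E] [NormedSpace ℝ E] (x : E) :
    Set (E →L[ℝ] ℝ) := {f | ‖f‖ = 1 ∧ f x = 1}

/-- ℓ∞³ : ℝ³ with the max norm. -/
abbrev Linf3 := Fin 3 → ℝ

/-- ℓ₁³ : ℝ³ with the ℓ¹ norm. -/
abbrev L13 := PiLp 1 (fun _ : Fin 3 => ℝ)

def x₁ : Linf3 := ![1, 1, 1]
def x₂ : Linf3 := ![-1, 1, 1]
def x₃ : Linf3 := ![-1, -1, 1]
def x₄ : Linf3 := ![1, -1, 1]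

/-- `M_T ∩ Ext(B_X)`: the norm-attainment set of `T` intersected with the
extreme points of the closed unit ball. -/
def MTExt (T : Linf3 →L[ℝ] L13) : Set Linf3 :=
  {x ∈ sphere (0 : Linf3) 1 | ‖T x‖ = ‖T‖} ∩ extremePoints ℝ (closedBall (0 : Linf3) 1)

/-- `Sk T k` is the set `S_k` of points `x` of `M_T ∩ Ext(B_X)` such that `T x` is
`k`-smooth. -/
def Sk (T : Linf3 →L[ℝ] L13) (k : ℕ) : Set Linf3 :=
  {x ∈ MTExt T | finrank ℝ (Submodule.span ℝ (suppFunctionals (T x))) = k}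

/-- `±A`, i.e. `A ∪ (-A)`. -/
def pm {E : Type*} [NormedAddCommGroup E] [NormedSpace ℝ E] (A : Set (E →L[ℝ] ℝ)) :
    Set (E →L[ℝ] ℝ) := A ∪ (-A)

def sg (b : Bool) : ℝ := if b then 1 else -1

lemma abs_sg (b : Bool) : |sg b| = 1 := by cases b <;> simp [sg]

def signF (ε : Fin 3 → Bool) : L13 →L[ℝ] ℝ :=
  ∑ i, sg (ε i) • PiLp.proj (𝕜 := ℝ) 1 (fun _ : Fin 3 => ℝ) i

lemma signF_apply (ε : Fin 3 → Bool) (y : L13) : signF ε y = ∑ i, sg (ε i) * y i := by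
  simp [signF]

lemma norm_L13 (y : L13) : ‖y‖ = ∑ i, |y i| := by
  rw [PiLp.norm_eq_of_L1]; rfl

lemma abs_signF_le (ε : Fin 3 → Bool) (y : L13) : |signF ε y| ≤ ‖y‖ := by
  rw [signF_apply, norm_L13]
  refine (Finset.abs_sum_le_sum_abs _ _).trans (le_of_eq ?_)
  simp [abs_mul, abs_sg]

lemma norm_signF_le (ε : Fin 3 → Bool) : ‖signF ε‖ ≤ 1 :=
  ContinuousLinearMap.opNorm_le_bound _ zero_le_one
    (fun y => by rw [one_mul]; exact abs_signF_le ε y)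

lemma exists_sign (y : L13) : ∃ ε, signF ε y = ‖y‖ := by
  refine ⟨fun i => decide (0 ≤ y i), ?_⟩
  rw [signF_apply, norm_L13]
  refine Finset.sum_congr rfl (fun i _ => ?_)
  by_cases h : 0 ≤ y i
  · simp [sg, h, abs_of_nonneg h]
  · simp [sg, h, abs_of_neg (not_le.1 h)]

lemma mem_supp {E : Type*} [NormedAddCommGroup E] [NormedSpace ℝ E] {y : E} (hy : ‖y‖ = 1)
    {f : E →L[ℝ] ℝ} (hf : ‖f‖ ≤ 1) (h : f y = 1) : f ∈ suppFunctionals y := by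
  refine ⟨le_antisymm hf ?_, h⟩
  have := f.le_opNorm y
  rwa [h, hy, mul_one, norm_one] at this

/-- evaluation functional `A ↦ g (A x)` as a linear map in `g` -/
def Ψ (x : Linf3) : (L13 →L[ℝ] ℝ) →ₗ[ℝ] ((Linf3 →L[ℝ] L13) →L[ℝ] ℝ) where
  toFun g := g.comp (ContinuousLinearMap.apply ℝ L13 x)
  map_add' _ _ := rfl
  map_smul' _ _ := rfl

lemma Ψ_apply (x : Linf3) (g : L13 →L[ℝ] ℝ) (A : Linf3 →L[ℝ] L13) : Ψ x g A = g (A x) := rfl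

lemma Ψ_mem {T : Linf3 →L[ℝ] L13} (hT : ‖T‖ = 1) {x : Linf3} (hx : ‖x‖ ≤ 1)
    {g : L13 →L[ℝ] ℝ} (hg : g ∈ suppFunctionals (T x)) : Ψ x g ∈ suppFunctionals T := by
  refine mem_supp hT (ContinuousLinearMap.opNorm_le_bound _ zero_le_one fun A => ?_) hg.2
  rw [Ψ_apply]
  calc ‖g (A x)‖ ≤ ‖g‖ * ‖A x‖ := g.le_opNorm _
    _ = ‖A x‖ := by rw [hg.1, one_mul]
    _ ≤ ‖A‖ * ‖x‖ := A.le_opNorm x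
    _ ≤ ‖A‖ * 1 := by gcongr
    _ = 1 * ‖A‖ := by ring

def pt : Fin 4 → Linf3 := ![x₁, x₂, x₃, x₄]

lemma opNorm_le_one (B : Linf3 →L[ℝ] L13) (h : ∀ i, ‖B (pt i)‖ ≤ 1) : ‖B‖ ≤ 1 := by
  refine ContinuousLinearMap.opNorm_le_bound _ zero_le_one fun x => ?_
  obtain ⟨ε, hε⟩ := exists_sign (B x)
  rw [← hε, one_mul]
  set l : Linf3 →L[ℝ] ℝ := (signF ε).comp B with hl
  have hlx : ∀ z : Linf3, l z = z 0 * l (Pi.single 0 1) + z 1 * l (Pi.single 1 1)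
      + z 2 * l (Pi.single 2 1) := by
    intro z
    have hz : z = z 0 • Pi.single 0 1 + z 1 • Pi.single 1 1 + z 2 • Pi.single 2 1 := by
      ext i; fin_cases i <;> simp
    conv_lhs => rw [hz]
    simp only [map_add, map_smul, smul_eq_mul]
  have hb : ∀ i, |l (pt i)| ≤ 1 := fun i => (abs_signF_le ε _).trans (h i)
  have e : signF ε (B x) = l x := rfl
  rw [e, hlx]
  have h0 := hb 0
  have h1 := hb 1
  have h2 := hb 2
  have h3 := hb 3
  rw [hlx, abs_le] at h0 h1 h2 h3
  simp only [pt, x₁, x₂, x₃, x₄, Matrix.cons_val] at h0 h1 h2 h3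
  have n0 : |x 0| ≤ ‖x‖ := norm_le_pi_norm x 0
  have n1 : |x 1| ≤ ‖x‖ := norm_le_pi_norm x 1
  have n2 : |x 2| ≤ ‖x‖ := norm_le_pi_norm x 2
  generalize l (Pi.single 0 1) = p at *
  generalize l (Pi.single 1 1) = q at *
  generalize l (Pi.single 2 1) = r at *
  have hs : |p| + |q| + |r| ≤ 1 := by
    rcases abs_cases p with ⟨a, _⟩ | ⟨a, _⟩ <;> rcases abs_cases q with ⟨b, _⟩ | ⟨b, _⟩ <;>
    rcases abs_cases r with ⟨c, _⟩ | ⟨c, _⟩ <;> rw [a, b, c] <;> linarith [h0.1, h0.2, h1.1, h1.2, h2.1, h2.2, h3.1, h3.2]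
  have k : ∀ a b : ℝ, |a| ≤ ‖x‖ → a * b ≤ ‖x‖ * |b| := fun a b hab =>
    (le_abs_self _).trans (by rw [abs_mul]; gcongr)
  have := k _ p n0
  have := k _ q n1
  have := k _ r n2
  nlinarith [norm_nonneg x]

lemma supp_T_sub {T : Linf3 →L[ℝ] L13} (hp : ∀ i, ‖T (pt i)‖ = 1)
    {F : (Linf3 →L[ℝ] L13) →L[ℝ] ℝ} (hF : F ∈ suppFunctionals T)
    (A : Linf3 →L[ℝ] L13)
    (hA : ∀ i ε, signF ε ∈ suppFunctionals (T (pt i)) → signF ε (A (pt i)) = 0) : F A = 0 := by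
  have key : ∀ᶠ t : ℝ in nhds 0, ‖T + t • A‖ ≤ 1 := by
    have : ∀ᶠ t : ℝ in nhds 0, ∀ i ε, signF ε ((T + t • A) (pt i)) ≤ 1 := by
      rw [Filter.eventually_all]; intro i
      rw [Filter.eventually_all]; intro ε
      have e : ∀ t : ℝ, signF ε ((T + t • A) (pt i))
          = signF ε (T (pt i)) + t * signF ε (A (pt i)) := by intro t; simp
      simp only [e]
      have hle : signF ε (T (pt i)) ≤ 1 := by
        have := (le_abs_self _).trans (abs_signF_le ε (T (pt i)))
        rwa [hp i] at this
      rcases hle.eq_or_lt with h | h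
      · have := hA i ε (mem_supp (hp i) (norm_signF_le ε) h)
        simp [h, this]
      · have hc : Filter.Tendsto (fun t : ℝ => signF ε (T (pt i)) + t * signF ε (A (pt i)))
            (nhds 0) (nhds (signF ε (T (pt i)) + 0 * signF ε (A (pt i)))) :=
          (Continuous.tendsto (by fun_prop) 0)
        rw [zero_mul, add_zero] at hc
        exact (hc.eventually (gt_mem_nhds h)).mono fun t ht => le_of_lt ht
    refine this.mono fun t ht => opNorm_le_one _ fun i => ?_
    obtain ⟨ε, hε⟩ := exists_sign ((T + t • A) (pt i))
    rw [← hε]; exact ht i ε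
  have key2 : ∀ᶠ t : ℝ in nhds 0, t * F A ≤ 0 := by
    refine key.mono fun t ht => ?_
    have h1 := (le_abs_self _).trans (F.le_opNorm (T + t • A))
    rw [hF.1, map_add, map_smul, hF.2, smul_eq_mul] at h1
    linarith
  obtain ⟨δ, hδ, h⟩ := Metric.eventually_nhds_iff.1 key2
  have a := @h (δ / 2) (by simp [abs_of_pos hδ]; linarith)
  have b := @h (-(δ / 2)) (by simp [abs_of_pos hδ]; linarith)
  have : δ / 2 * F A = 0 := by linarith
  rcases mul_eq_zero.1 this with h | h
  · linarith
  · exact h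

abbrev VV (T : Linf3 →L[ℝ] L13) (x : Linf3) : Submodule ℝ (L13 →L[ℝ] ℝ) :=
  Submodule.span ℝ (suppFunctionals (T x))

def Φ (T : Linf3 →L[ℝ] L13) :
    (∀ i : Fin 4, VV T (pt i)) →ₗ[ℝ] ((Linf3 →L[ℝ] L13) →L[ℝ] ℝ) :=
  ∑ i, (Ψ (pt i)) ∘ₗ (VV T (pt i)).subtype ∘ₗ LinearMap.proj i

lemma Φ_apply (T : Linf3 →L[ℝ] L13) (g) :
    Φ T g = ∑ i, Ψ (pt i) (g i : L13 →L[ℝ] ℝ) := by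
  simp [Φ]

lemma range_Φ {T : Linf3 →L[ℝ] L13} (hT : ‖T‖ = 1) (hp : ∀ i, ‖T (pt i)‖ = 1)
    (hn : ∀ i, ‖pt i‖ ≤ 1) :
    LinearMap.range (Φ T) = Submodule.span ℝ (suppFunctionals T) := by
  apply le_antisymm
  · rintro _ ⟨g, rfl⟩
    rw [Φ_apply]
    refine Submodule.sum_mem _ fun i _ => ?_
    have : (VV T (pt i)).map (Ψ (pt i)) ≤ Submodule.span ℝ (suppFunctionals T) := by
      rw [Submodule.map_span_le]
      exact fun g hg => Submodule.subset_span (Ψ_mem hT (hn i) hg)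
    exact this (Submodule.mem_map_of_mem (g i).2)
  · rw [Submodule.span_le]
    intro F hF
    let ι := {q : Fin 4 × (Fin 3 → Bool) // signF q.2 ∈ suppFunctionals (T (pt q.1))}
    have : Finite ι := Subtype.finite
    have : Fintype ι := Fintype.ofFinite ι
    let L : ι → ((Linf3 →L[ℝ] L13) →L[ℝ] ℝ) := fun q => Ψ (pt q.1.1) (signF q.1.2)
    have h := mem_span_of_iInf_ker_le_ker (𝕜 := ℝ) (L := fun q => (L q : (Linf3 →L[ℝ] L13) →ₗ[ℝ] ℝ))
      (K := (F : (Linf3 →L[ℝ] L13) →ₗ[ℝ] ℝ)) (by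
        intro A hA
        simp only [Submodule.mem_iInf, LinearMap.mem_ker] at hA ⊢
        exact supp_T_sub hp hF A fun i ε hε => hA ⟨(i, ε), hε⟩)
    rw [Submodule.mem_span_range_iff_exists_fun] at h
    obtain ⟨c, hc⟩ := h
    have hF' : F = ∑ q, c q • L q := by
      ext A
      have := LinearMap.congr_fun hc A
      simp at this
      simp [← this]
    rw [hF']
    refine Submodule.sum_mem _ fun q _ => Submodule.smul_mem _ _ ?_
    refine ⟨Pi.single q.1.1 ⟨signF q.1.2, Submodule.subset_span q.2⟩, ?_⟩
    rw [Φ_apply, Finset.sum_eq_single q.1.1]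
    · simp [L]
    · intro b _ hb; simp [hb]
    · simp

lemma Φ_inj {T : Linf3 →L[ℝ] L13} (h : ∀ v, (∀ i, v ∈ VV T (pt i)) → v = 0) :
    Function.Injective (Φ T) := by
  rw [injective_iff_map_eq_zero]
  intro g hg
  have hk : ∀ (w : L13) (j : Fin 3), ∑ i, pt i j * (g i : L13 →L[ℝ] ℝ) w = 0 := by
    intro w j
    have := congrArg (fun f => f ((ContinuousLinearMap.proj (R := ℝ) (φ := fun _ : Fin 3 => ℝ) j).smulRight w)) hg
    simpa [Φ_apply, Ψ_apply] using this
  have a : ∀ w, (g 0 : L13 →L[ℝ] ℝ) w = (g 2 : L13 →L[ℝ] ℝ) w ∧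
      (g 0 : L13 →L[ℝ] ℝ) w = - (g 1 : L13 →L[ℝ] ℝ) w ∧
      (g 0 : L13 →L[ℝ] ℝ) w = - (g 3 : L13 →L[ℝ] ℝ) w := by
    intro w
    have h0 := hk w 0
    have h1 := hk w 1
    have h2 := hk w 2
    simp [Fin.sum_univ_four, pt, x₁, x₂, x₃, x₄] at h0 h1 h2
    refine ⟨?_, ?_, ?_⟩ <;> linarith
  have e2 : (g 2 : L13 →L[ℝ] ℝ) = g 0 := by ext w; linarith [(a w).1]
  have e1 : (g 1 : L13 →L[ℝ] ℝ) = -g 0 := by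
    ext w; rw [neg_apply]; linarith [(a w).2.1]
  have e3 : (g 3 : L13 →L[ℝ] ℝ) = -g 0 := by
    ext w; rw [neg_apply]; linarith [(a w).2.2]
  have z : (g 0 : L13 →L[ℝ] ℝ) = 0 := by
    apply h
    intro i
    fin_cases i
    · exact (g 0).2
    · have := (VV T (pt 1)).neg_mem (g 1).2
      rwa [e1, neg_neg] at this
    · have := (g 2).2
      rwa [e2] at this
    · have := (VV T (pt 3)).neg_mem (g 3).2
      rwa [e3, neg_neg] at this
  funext i
  apply Subtype.ext
  fin_cases i
  · exact z
  · simpa [z] using e1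
  · simpa [z] using e2
  · simpa [z] using e3

/-- coordinates of a functional -/
lemma fun_coord (f : L13 →L[ℝ] ℝ) (y : L13) :
    f y = ∑ i, y i * f (PiLp.single 1 i 1) := by
  have hy : y = ∑ i, y i • (PiLp.single 1 i (1 : ℝ) : L13) := by
    ext j; simp [Fin.sum_univ_three]; fin_cases j <;> simp
  conv_lhs => rw [hy]
  simp only [map_sum, map_smul, smul_eq_mul]

lemma coord_le {f : L13 →L[ℝ] ℝ} (hf : ‖f‖ ≤ 1) (i : Fin 3) :
    |f (PiLp.single 1 i 1)| ≤ 1 := by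
  have := f.le_opNorm (PiLp.single 1 i 1)
  have h1 : ‖(PiLp.single 1 i (1 : ℝ) : L13)‖ = 1 := by simp
  rw [h1, mul_one] at this
  exact this.trans hf

/-- supporting functionals have prescribed coordinates -/
lemma supp_coord {y : L13} (hy : ‖y‖ = 1) {f : L13 →L[ℝ] ℝ} (hf : f ∈ suppFunctionals y)
    (i : Fin 3) : y i * f (PiLp.single 1 i 1) = |y i| := by
  have hle : ∀ j ∈ Finset.univ, y j * f (PiLp.single 1 j 1) ≤ |y j| := by
    intro j _
    refine (le_abs_self _).trans ?_
    rw [abs_mul]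
    exact mul_le_of_le_one_right (abs_nonneg _) (coord_le hf.1.le j)
  have hs : ∑ j, y j * f (PiLp.single 1 j 1) = ∑ j, |y j| := by
    rw [← fun_coord, ← norm_L13, hf.2, hy]
  exact (Finset.sum_eq_sum_iff_of_le hle).1 hs i (Finset.mem_univ i)

lemma span_coord {y : L13} (hy : ‖y‖ = 1) {g : L13 →L[ℝ] ℝ}
    (hg : g ∈ Submodule.span ℝ (suppFunctionals y)) :
    ∃ c : ℝ, ∀ i, y i * g (PiLp.single 1 i 1) = c * |y i| := by
  induction hg using Submodule.span_induction with
  | mem f hf => exact ⟨1, fun i => by rw [supp_coord hy hf, one_mul]⟩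
  | zero => exact ⟨0, fun i => by simp⟩
  | add f g _ _ hf hg =>
    obtain ⟨c, hc⟩ := hf
    obtain ⟨d, hd⟩ := hg
    exact ⟨c + d, fun i => by rw [add_apply, mul_add, hc, hd, add_mul]⟩
  | smul a f _ hf =>
    obtain ⟨c, hc⟩ := hf
    exact ⟨a * c, fun i => by
      rw [smul_apply, smul_eq_mul, mul_left_comm, hc, mul_assoc]⟩

lemma signF_coord (ε : Fin 3 → Bool) (i : Fin 3) : signF ε (PiLp.single 1 i 1) = sg (ε i) := by
  rw [signF_apply]; simp

lemma fun_ext {f g : L13 →L[ℝ] ℝ} (h : ∀ i, f (PiLp.single 1 i 1) = g (PiLp.single 1 i 1)) :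
    f = g := by
  ext y; rw [fun_coord, fun_coord g]; simp [h]

/-- a sign functional in the span of `J y` is up to sign an extreme point of `J y` -/
lemma sign_ext {y : L13} (hy : ‖y‖ = 1) {ε : Fin 3 → Bool} {g : L13 →L[ℝ] ℝ}
    (hgε : g = signF ε ∨ g = -signF ε)
    (hg : g ∈ Submodule.span ℝ (suppFunctionals y)) :
    g ∈ pm (extremePoints ℝ (suppFunctionals y)) := by
  have hg1 : ∀ i, |g (PiLp.single 1 i 1)| = 1 := by
    intro i
    rcases hgε with rfl | rfl
    · rw [signF_coord, abs_sg]
    · rw [neg_apply, abs_neg, signF_coord, abs_sg]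
  have hn : ‖g‖ ≤ 1 := by
    rcases hgε with rfl | rfl
    · exact norm_signF_le ε
    · rw [norm_neg]; exact norm_signF_le ε
  have hex : ∀ h : L13 →L[ℝ] ℝ, (∀ i, |h (PiLp.single 1 i 1)| = 1) → h ∈ suppFunctionals y →
      h ∈ extremePoints ℝ (suppFunctionals y) := by
    intro h hh hm
    rw [mem_extremePoints_iff_left]
    refine ⟨hm, ?_⟩
    rintro f₁ hf₁ f₂ hf₂ ⟨a, b, ha, hb, hab, rfl⟩
    apply fun_ext
    intro i
    have k1 := abs_le.1 (coord_le hf₁.1.le i)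
    have k2 := abs_le.1 (coord_le hf₂.1.le i)
    have k3 := hh i
    simp only [add_apply, smul_apply, smul_eq_mul] at k3 ⊢
    generalize f₁ (PiLp.single 1 i 1) = p at *
    generalize f₂ (PiLp.single 1 i 1) = q at *
    have hb' : b = 1 - a := by linarith
    subst hb'
    rcases (abs_eq zero_le_one).1 k3 with h | h
    · have : p = 1 := by nlinarith
      rw [h, this]
    · have : p = -1 := by nlinarith
      rw [h, this]
  obtain ⟨c, hc⟩ := span_coord hy hg
  have hgy : g y = c := by
    rw [fun_coord]; simp only [hc]
    rw [← Finset.mul_sum, ← norm_L13, hy, mul_one]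
  have hc1 : |c| = 1 := by
    have h : ∑ i, |y i * g (PiLp.single 1 i 1)| = ∑ i, |c * abs (y i)| := by simp only [hc]
    simp only [abs_mul, hg1, mul_one, abs_abs] at h
    rw [← Finset.mul_sum, ← norm_L13, hy] at h
    linarith
  rcases (abs_eq zero_le_one).1 hc1 with h | h
  · exact Or.inl (hex g hg1 (mem_supp hy hn (hgy.trans h)))
  · refine Or.inr (hex (-g) (fun i => ?_) (mem_supp hy ?_ ?_))
    · rw [neg_apply, abs_neg, hg1]
    · rwa [norm_neg]
    · rw [neg_apply, hgy, h, neg_neg]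

/-- smooth points -/
lemma smooth_pt {y : L13} (hy : ‖y‖ = 1)
    (h : finrank ℝ (Submodule.span ℝ (suppFunctionals y)) = 1) {v : L13 →L[ℝ] ℝ} (hv : v ≠ 0)
    (hvm : v ∈ Submodule.span ℝ (suppFunctionals y)) :
    ∃ ε, suppFunctionals y = {signF ε} ∧
      (signF ε = ‖v‖⁻¹ • v ∨ signF ε = -(‖v‖⁻¹ • v)) := by
  obtain ⟨ε, hε⟩ := exists_sign y
  have hm : signF ε ∈ suppFunctionals y := mem_supp hy (norm_signF_le ε) (hε.trans hy)
  have hprop := (finrank_eq_one_iff_of_nonzero' (⟨v, hvm⟩ : Submodule.span ℝ (suppFunctionals y))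
    (by simpa using hv)).1 h
  have hp : ∀ f ∈ suppFunctionals y, ∃ c : ℝ, c • v = f := by
    intro f hf
    obtain ⟨c, hc⟩ := hprop ⟨f, Submodule.subset_span hf⟩
    exact ⟨c, congrArg Subtype.val hc⟩
  obtain ⟨c, hc⟩ := hp _ hm
  have hcv : c * v y = 1 := by
    have := hm.2; rw [← hc] at this; simpa using this
  refine ⟨ε, ?_, ?_⟩
  · ext f
    refine ⟨fun hf => ?_, fun hf => hf ▸ hm⟩
    obtain ⟨d, hd⟩ := hp f hf
    have hdv : d * v y = 1 := by
      have := hf.2; rw [← hd] at this; simpa using this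
    have hvy : v y ≠ 0 := fun h0 => by simp [h0] at hcv
    have : d = c := mul_right_cancel₀ hvy (hdv.trans hcv.symm)
    rw [mem_singleton_iff, ← hd, ← hc, this]
  · have hn : |c| * ‖v‖ = 1 := by
      have := hm.1; rw [← hc, norm_smul] at this; exact this
    have hc' : |c| = ‖v‖⁻¹ := eq_inv_of_mul_eq_one_left hn
    rcases abs_choice c with h | h
    · left; rw [← hc, ← hc', h]
    · right; rw [← hc, ← hc', h]; ext z; simp

lemma supp_neg {E : Type*} [NormedAddCommGroup E] [NormedSpace ℝ E] (y : E) :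
    suppFunctionals (-y) = -suppFunctionals y := by
  ext f; simp [suppFunctionals]

lemma VV_neg (T : Linf3 →L[ℝ] L13) (x : Linf3) : VV T (-x) = VV T x := by
  unfold VV
  rw [map_neg, supp_neg, Submodule.span_neg]

lemma finrank_VV_neg (T : Linf3 →L[ℝ] L13) (x : Linf3) :
    finrank ℝ (VV T (-x)) = finrank ℝ (VV T x) := by rw [VV_neg]

lemma count (T : Linf3 →L[ℝ] L13) 
    (hMT : MTExt T = {x₁, -x₁, x₂, -x₂, x₃, -x₃, x₄, -x₄}) (k m : ℕ)
    (h : (Sk T k).encard = m) :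
    2 * ((if finrank ℝ (VV T x₁) = k then 1 else 0) + (if finrank ℝ (VV T x₂) = k then 1 else 0)
      + (if finrank ℝ (VV T x₃) = k then 1 else 0) + (if finrank ℝ (VV T x₄) = k then 1 else 0))
      = m := by
  classical
  have e : Sk T k = (({x₁, -x₁, x₂, -x₂, x₃, -x₃, x₄, -x₄} : Finset Linf3).filter
      (fun x => finrank ℝ (VV T x) = k) : Finset Linf3) := by
    ext x
    rw [Sk, hMT]; simp
  rw [e, Set.encard_coe_eq_coe_finsetCard, Nat.cast_inj, Finset.card_filter] at h
  rw [← h]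
  have n3 : ∀ u v : Linf3, u = v ↔ u 0 = v 0 ∧ u 1 = v 1 ∧ u 2 = v 2 := fun u v =>
    ⟨fun h => by simp [h], fun h => by ext i; fin_cases i <;> simp [h]⟩
  rw [Finset.sum_insert, Finset.sum_insert, Finset.sum_insert, Finset.sum_insert,
    Finset.sum_insert, Finset.sum_insert, Finset.sum_insert, Finset.sum_singleton]
  · simp only [finrank_VV_neg]; ring
  all_goals
    simp only [Finset.mem_insert, Finset.mem_singleton, n3, x₁, x₂, x₃, x₄, Pi.neg_apply, Matrix.cons_val]
    norm_num

theorem stmt_12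
    (T : Linf3 →L[ℝ] L13) (hT : ‖T‖ = 1)
    (hMT : MTExt T = {x₁, -x₁, x₂, -x₂, x₃, -x₃, x₄, -x₄})
    (h1 : (Sk T 1).encard = 6) (h2 : (Sk T 2).encard = 2)
    (h3 : (Sk T 3).encard = 0)
    (hJ : ¬ ((∀ xi ∈ Sk T 1, ∀ xj ∈ Sk T 1,
        pm (suppFunctionals (T xi)) = pm (suppFunctionals (T xj))) ∧
      (∀ xi ∈ Sk T 1, ∀ xk ∈ Sk T 2,
        pm (suppFunctionals (T xi)) ⊆ pm (extremePoints ℝ (suppFunctionals (T xk))))))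
    :
    finrank ℝ (Submodule.span ℝ (suppFunctionals T)) = 5 := by
  have hmem : ∀ x ∈ MTExt T, ‖T x‖ = 1 := fun x hx => by rw [← hT]; exact hx.1.2
  have hpm : ∀ i, pt i ∈ MTExt T := by
    intro i; rw [hMT]; fin_cases i <;> simp [pt]
  have hp : ∀ i, ‖T (pt i)‖ = 1 := fun i => hmem _ (hpm i)
  have hn : ∀ i, ‖pt i‖ ≤ 1 := fun i => by
    have := (hpm i).1.1
    rw [mem_sphere_zero_iff_norm] at this
    exact this.le
  have : ∀ i, Module.Free ℝ (VV T (pt i)) := fun i => Module.Free.of_divisionRing ℝ (VV T (pt i))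
  rw [← range_Φ hT hp hn, LinearMap.finrank_range_of_inj, Module.finrank_pi_fintype]
  · have c1 := count T hMT 1 6 h1
    have c2 := count T hMT 2 2 h2
    simp only [Fin.sum_univ_four, pt, Matrix.cons_val]
    change finrank ℝ (VV T x₁) + finrank ℝ (VV T x₂) + finrank ℝ (VV T x₃) +
      finrank ℝ (VV T x₄) = 5
    generalize finrank ℝ (VV T x₁) = a at c1 c2 ⊢
    generalize finrank ℝ (VV T x₂) = b at c1 c2 ⊢
    generalize finrank ℝ (VV T x₃) = c at c1 c2 ⊢
    generalize finrank ℝ (VV T x₄) = d at c1 c2 ⊢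
    grind
  · apply Φ_inj
    intro v hv
    by_contra hv0
    have hvx : ∀ x ∈ MTExt T, v ∈ VV T x := by
      intro x hx
      rw [hMT] at hx
      have a0 := hv 0
      have a1 := hv 1
      have a2 := hv 2
      have a3 := hv 3
      simp only [pt, Matrix.cons_val] at a0 a1 a2 a3
      rcases hx with rfl | rfl | rfl | rfl | rfl | rfl | rfl | rfl <;> (try rw [VV_neg]) <;> assumption
    apply hJ
    have hS : ∀ x ∈ Sk T 1, ∃ ε, suppFunctionals (T x) = {signF ε} ∧
      (signF ε = ‖v‖⁻¹ • v ∨ signF ε = -(‖v‖⁻¹ • v)) := fun x hx =>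
      smooth_pt (hmem x hx.1) hx.2 hv0 (hvx x hx.1)
    constructor
    · intro xi hi xj hj
      obtain ⟨ε, h, h'⟩ := hS xi hi
      obtain ⟨δ, k, k'⟩ := hS xj hj
      rw [h, k]
      rcases h' with h' | h' <;> rcases k' with k' | k' <;> rw [h', k'] <;>
        simp [pm, Set.union_comm, Set.pair_comm]
    · intro xi hi xk hk
      obtain ⟨ε, h, h'⟩ := hS xi hi
      have hvk := hvx xk hk.1
      have hεk : signF ε ∈ VV T xk := by
        rcases h' with h' | h' <;> rw [h']
        · exact Submodule.smul_mem _ _ hvk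
        · exact Submodule.neg_mem _ (Submodule.smul_mem _ _ hvk)
      rw [h]
      rintro g (hg | hg)
      · have hg : g = signF ε := hg
        exact sign_ext (hmem _ hk.1) (Or.inl hg) (hg ▸ hεk)
      · have hg : -g = signF ε := hg
        have hg : g = -signF ε := by rw [← hg, neg_neg]
        exact sign_ext (hmem _ hk.1) (Or.inr hg) (hg ▸ Submodule.neg_mem _ hεk)
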